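/- Let V₁, V₂: ℝ → [0,∞) be Orlicz functions with V₁(x)/V₂(x) → ∞ as |x| → ∞. Fix R ∈ (0,∞). Then the maximizer ν* := argmax{ h(ν) : ν a probability measure on ℝ, m_{V₁}(ν) ≤ 1, m_{V₂}(ν) ∈ [0,R] } exists and is unique. Moreover, if X₁^{n,V₁} is uniformly distributed on B_1^{n,V₁} with empirical measure L^{n,V₁} := (1/n) Σ_{i=1}^n δ_{X₁^{n,V₁}(i)}, then for every open set G (in the topology induced by the metric d_{V₂}(μ,ν) := d_w(μ,ν) + |m_{V₂}(μ) − m_{V₂}(ν)| on probability measures with finite V₂-moment) containing ν*, one has lim_{ε→0} lim_{n→∞} ℙ[ L^{n,V₁} ∈ G | m_{V₂}(L^{n,V₁}) ∈ [−ε, R+ε] ] = 1. -/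

import Mathlib

open MeasureTheory Real Filter Topology ENNReal Classical

noncomputable section

/-- An Orlicz function: convex, symmetric, vanishing only at `0`, nonnegative. -/
def IsOrlicz (V : ℝ → ℝ) : Prop :=
  ConvexOn ℝ Set.univ V ∧ (∀ x, V (-x) = V x) ∧ V 0 = 0 ∧ (∀ x, x ≠ 0 → 0 < V x) ∧
    (∀ x, 0 ≤ V x)

/-- The Orlicz ball `B_R^{n,V} = {x ∈ ℝⁿ : ∑ V(x_k) ≤ R n}`. -/
def OrliczBall (V : ℝ → ℝ) (R : ℝ) (n : ℕ) : Set (Fin n → ℝ) :=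
  {x | ∑ i, V (x i) ≤ R * n}

/-- The uniform distribution on the Orlicz ball (normalized Lebesgue measure). -/
def unifBall (V : ℝ → ℝ) (R : ℝ) (n : ℕ) : Measure (Fin n → ℝ) :=
  (volume (OrliczBall V R n))⁻¹ • volume.restrict (OrliczBall V R n)

/-- The `V`-moment `m_V(μ) = ∫ V dμ`, as a lower integral in `[0,∞]`. -/
def mV (V : ℝ → ℝ) (μ : Measure ℝ) : ℝ≥0∞ := ∫⁻ x, ENNReal.ofReal (V x) ∂μ

/-- The generalized Wasserstein space `M₁^W(ℝ)` of probability measures with finite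
`W`-moment. -/
def M1 (W : ℝ → ℝ) : Type := {μ : ProbabilityMeasure ℝ // mV W ↑μ ≠ ⊤}

/-- The `d_W`-topology on `M₁^W(ℝ)`: the topology of weak convergence together with
convergence of `W`-moments, i.e. the topology induced by `μ ↦ (μ, m_W(μ))`. -/
instance (W : ℝ → ℝ) : TopologicalSpace (M1 W) :=
  TopologicalSpace.induced
    (fun μ : M1 W => ((μ.1 : ProbabilityMeasure ℝ), (mV W ↑μ.1).toReal)) inferInstance

/-- The empirical probability measure `(1/(n+1)) ∑_{i} δ_{x i}`. -/
def empProb (n : ℕ) (x : Fin (n + 1) → ℝ) : ProbabilityMeasure ℝ :=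
  ⟨((n : ℝ≥0∞) + 1)⁻¹ • ∑ i, Measure.dirac (x i), by
    constructor
    simp [Measure.smul_apply, MeasureTheory.Measure.finset_sum_apply]
    rw [ENNReal.inv_mul_cancel] <;> simp⟩

/-- The empirical measure, as an element of `M₁^W(ℝ)`. -/
def empM1 (W : ℝ → ℝ) (n : ℕ) (x : Fin (n + 1) → ℝ) : M1 W :=
  ⟨empProb n x, by
    show (∫⁻ y, ENNReal.ofReal (W y)
        ∂(((n : ℝ≥0∞) + 1)⁻¹ • ∑ i, Measure.dirac (x i))) ≠ ⊤
    rw [lintegral_smul_measure, lintegral_finset_sum_measure]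
    simp only [lintegral_dirac]
    exact ENNReal.mul_ne_top (by simp)
      (by simp [ENNReal.sum_eq_top, ENNReal.ofReal_ne_top])⟩

/-- Differential entropy `h(ν) = -∫ log(dν/dx) dν`, valued in `EReal`, with
`h(ν) = ⊥` when `ν` is not absolutely continuous (or the integral does not exist). -/
def diffEnt (ν : Measure ℝ) : EReal :=
  if ν ≪ volume ∧ Integrable (fun x => Real.log (ν.rnDeriv volume x).toReal) ν
  then ((-(∫ x, Real.log (ν.rnDeriv volume x).toReal ∂ν) : ℝ) : EReal) else ⊥

namespace IsOrlicz

variable {V : ℝ → ℝ}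

lemma continuous (h : IsOrlicz V) : Continuous V :=
  continuousOn_univ.1 (h.1.continuousOn isOpen_univ)

lemma nonneg (h : IsOrlicz V) (x : ℝ) : 0 ≤ V x := h.2.2.2.2 x

lemma map_zero (h : IsOrlicz V) : V 0 = 0 := h.2.2.1

lemma pos (h : IsOrlicz V) {x : ℝ} (hx : x ≠ 0) : 0 < V x := h.2.2.2.1 x hx

lemma map_abs (h : IsOrlicz V) (x : ℝ) : V |x| = V x := by
  rcases abs_choice x with hx | hx <;> rw [hx]
  exact h.2.1 x

lemma map_mul_le (h : IsOrlicz V) {t : ℝ} (ht0 : 0 ≤ t) (ht1 : t ≤ 1) (x : ℝ) :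
    V (t * x) ≤ t * V x := by
  have := h.1.2 (Set.mem_univ x) (Set.mem_univ 0) ht0 (sub_nonneg.2 ht1) (by ring)
  simpa [h.map_zero] using this

lemma mono_abs (h : IsOrlicz V) {x y : ℝ} (hxy : |x| ≤ |y|) : V x ≤ V y := by
  rw [← h.map_abs x, ← h.map_abs y]
  rcases (abs_nonneg y).eq_or_lt with hy | hy
  · rw [le_antisymm hxy (hy ▸ abs_nonneg x)]
  · have h1 := h.map_mul_le (t := |x| / |y|) (by positivity) ((div_le_one hy).2 hxy) |y|
    rw [div_mul_cancel₀ _ hy.ne'] at h1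
    exact h1.trans (mul_le_of_le_one_left (h.nonneg _) ((div_le_one hy).2 hxy))

lemma mul_abs_sub_one_le (h : IsOrlicz V) (x : ℝ) : V 1 * (|x| - 1) ≤ V x := by
  have h1 : 0 < V 1 := h.pos one_ne_zero
  rcases le_total |x| 1 with hx | hx
  · nlinarith [h.nonneg x]
  · have hx0 : 0 < |x| := by linarith
    have h2 := h.map_mul_le (t := |x|⁻¹) (by positivity) (inv_le_one_of_one_le₀ hx) |x|
    rw [inv_mul_cancel₀ hx0.ne', h.map_abs] at h2
    have h3 : V 1 * |x| ≤ V x := by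
      have := mul_le_mul_of_nonneg_right h2 hx0.le
      rwa [mul_comm _ (V x), mul_assoc, inv_mul_cancel₀ hx0.ne', mul_one] at this
    linarith

end IsOrlicz

lemma integrable_exp_neg_mul_abs_sub_one {κ : ℝ} (hκ : 0 < κ) :
    Integrable (fun x : ℝ => rexp (-(κ * (|x| - 1)))) := by
  have h1 : Integrable (fun x : ℝ => rexp (-κ * |x|)) := by
    rw [← integrableOn_univ, ← Set.Iic_union_Ioi (a := (0 : ℝ)), integrableOn_union]
    constructor
    · refine (integrableOn_exp_mul_Iic hκ 0).congr_fun (fun x hx => ?_) measurableSet_Iic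
      simp [abs_of_nonpos (Set.mem_Iic.1 hx)]
    · refine (integrableOn_exp_mul_Ioi (neg_lt_zero.2 hκ) 0).congr_fun (fun x hx => ?_)
        measurableSet_Ioi
      simp [abs_of_pos (Set.mem_Ioi.1 hx)]
  refine (h1.const_mul (rexp κ)).congr (ae_of_all _ fun x => ?_)
  simp only [← Real.exp_add]
  congr 1
  ring

/-- The (negative) Gibbs potential `-(a V₁ + b V₂)`. -/
def gibbsPot (V₁ V₂ : ℝ → ℝ) (p : ℝ × ℝ) (x : ℝ) : ℝ := -(p.1 * V₁ x + p.2 * V₂ x)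

/-- The partition function `∫ exp(-(a V₁ + b V₂))`. -/
def partFun (V₁ V₂ : ℝ → ℝ) (p : ℝ × ℝ) : ℝ := ∫ x, rexp (gibbsPot V₁ V₂ p x)

section Gibbs

variable {V₁ V₂ : ℝ → ℝ}

lemma continuous_gibbsPot (hV₁ : IsOrlicz V₁) (hV₂ : IsOrlicz V₂) (p : ℝ × ℝ) :
    Continuous (gibbsPot V₁ V₂ p) :=
  ((hV₁.continuous.const_mul _).add (hV₂.continuous.const_mul _)).neg

lemma exp_gibbsPot_le (hV₁ : IsOrlicz V₁) (hV₂ : IsOrlicz V₂) {p : ℝ × ℝ} (h1 : 0 ≤ p.1)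
    (h2 : 0 ≤ p.2) {κ : ℝ} (hκ : 0 ≤ κ) (hκp : κ ≤ p.1 * V₁ 1 + p.2 * V₂ 1) (x : ℝ) :
    rexp (gibbsPot V₁ V₂ p x) ≤ rexp (-(κ * (|x| - 1))) := by
  refine Real.exp_le_exp.2 (neg_le_neg ?_)
  rcases le_total |x| 1 with hx | hx
  · have := mul_nonneg h1 (hV₁.nonneg x)
    have := mul_nonneg h2 (hV₂.nonneg x)
    nlinarith
  · have := mul_le_mul_of_nonneg_left (hV₁.mul_abs_sub_one_le x) h1
    have := mul_le_mul_of_nonneg_left (hV₂.mul_abs_sub_one_le x) h2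
    nlinarith

lemma integrable_exp_gibbsPot (hV₁ : IsOrlicz V₁) (hV₂ : IsOrlicz V₂) {p : ℝ × ℝ} (h1 : 0 ≤ p.1)
    (h2 : 0 ≤ p.2) (hp : 0 < p.1 + p.2) : Integrable (fun x => rexp (gibbsPot V₁ V₂ p x)) := by
  have hκ : 0 < p.1 * V₁ 1 + p.2 * V₂ 1 := by
    have := hV₁.pos one_ne_zero
    have := hV₂.pos one_ne_zero
    rcases h1.eq_or_lt with h | h
    · have : 0 < p.2 := by linarith
      positivity
    · positivity
  refine (integrable_exp_neg_mul_abs_sub_one hκ).mono'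
    (continuous_gibbsPot hV₁ hV₂ p).rexp.aestronglyMeasurable (ae_of_all _ fun x => ?_)
  rw [Real.norm_of_nonneg (Real.exp_pos _).le]
  exact exp_gibbsPot_le hV₁ hV₂ h1 h2 hκ.le le_rfl x

lemma le_partFun (hV₁ : IsOrlicz V₁) (hV₂ : IsOrlicz V₂) {p : ℝ × ℝ} (h1 : 0 ≤ p.1)
    (h2 : 0 ≤ p.2) (hp : 0 < p.1 + p.2) {r : ℝ} (hr : 0 < r) :
    2 * r * rexp (gibbsPot V₁ V₂ p r) ≤ partFun V₁ V₂ p := by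
  have hint := integrable_exp_gibbsPot hV₁ hV₂ h1 h2 hp
  calc 2 * r * rexp (gibbsPot V₁ V₂ p r)
      = ∫ x in Set.Icc (-r) r, rexp (gibbsPot V₁ V₂ p r) := by
        rw [setIntegral_const, Measure.real, Real.volume_Icc,
          ENNReal.toReal_ofReal (by linarith), smul_eq_mul]
        ring
    _ ≤ ∫ x in Set.Icc (-r) r, rexp (gibbsPot V₁ V₂ p x) := by
        refine setIntegral_mono_on (by simp) hint.integrableOn
          measurableSet_Icc fun x hx => Real.exp_le_exp.2 (neg_le_neg ?_)
        have hx' : |x| ≤ |r| := by rw [abs_of_pos hr]; exact abs_le.2 hx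
        exact add_le_add (mul_le_mul_of_nonneg_left (hV₁.mono_abs hx') h1)
          (mul_le_mul_of_nonneg_left (hV₂.mono_abs hx') h2)
    _ ≤ partFun V₁ V₂ p :=
        setIntegral_le_integral hint (ae_of_all _ fun x => (Real.exp_pos _).le)

/-- The dual functional of the entropy maximization problem. -/
def dualFun (V₁ V₂ : ℝ → ℝ) (R : ℝ) (p : ℝ × ℝ) : ℝ :=
  Real.log (partFun V₁ V₂ p) + (p.1 + p.2 * R)

lemma le_dualFun (hV₁ : IsOrlicz V₁) (hV₂ : IsOrlicz V₂) {R : ℝ} {p : ℝ × ℝ} (h1 : 0 ≤ p.1)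
    (h2 : 0 ≤ p.2) (hp : 0 < p.1 + p.2) {r : ℝ} (hr : 0 < r) :
    Real.log (2 * r) + (p.1 * (1 - V₁ r) + p.2 * (R - V₂ r)) ≤ dualFun V₁ V₂ R p := by
  have h := Real.log_le_log (by positivity) (le_partFun hV₁ hV₂ h1 h2 hp hr)
  rw [Real.log_mul (by positivity) (Real.exp_pos _).ne', Real.log_exp] at h
  simp only [dualFun]
  simp only [gibbsPot] at h
  linarith

lemma continuousOn_dualFun (hV₁ : IsOrlicz V₁) (hV₂ : IsOrlicz V₂) (R : ℝ) {δ : ℝ} (hδ : 0 < δ) :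
    ContinuousOn (dualFun V₁ V₂ R) {p | 0 ≤ p.1 ∧ 0 ≤ p.2 ∧ δ ≤ p.1 + p.2} := by
  have h1 := hV₁.pos one_ne_zero
  have h2 := hV₂.pos one_ne_zero
  have hκ : 0 < δ * min (V₁ 1) (V₂ 1) := by positivity
  refine ContinuousOn.add (ContinuousOn.log ?_ fun p hp => ?_) (by fun_prop)
  · refine continuousOn_of_dominated (bound := fun x => rexp (-(δ * min (V₁ 1) (V₂ 1) * (|x| - 1))))
      (fun p _ => (continuous_gibbsPot hV₁ hV₂ p).rexp.aestronglyMeasurable)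
      (fun p hp => ae_of_all _ fun x => ?_) (integrable_exp_neg_mul_abs_sub_one hκ)
      (ae_of_all _ fun x => Continuous.continuousOn (by unfold gibbsPot; fun_prop))
    obtain ⟨hp1, hp2, hp⟩ := hp
    rw [Real.norm_of_nonneg (Real.exp_pos _).le]
    refine exp_gibbsPot_le hV₁ hV₂ hp1 hp2 hκ.le ?_ x
    have := mul_le_mul_of_nonneg_left (min_le_left (V₁ 1) (V₂ 1)) hp1
    have := mul_le_mul_of_nonneg_left (min_le_right (V₁ 1) (V₂ 1)) hp2
    have : 0 < min (V₁ 1) (V₂ 1) := by positivity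
    nlinarith
  · obtain ⟨hp1, hp2, hp⟩ := hp
    have := le_partFun hV₁ hV₂ hp1 hp2 (hδ.trans_le hp) one_pos
    exact ((by positivity : 0 < 2 * 1 * rexp (gibbsPot V₁ V₂ p 1)).trans_le this).ne'

lemma exists_isMinOn_dualFun (hV₁ : IsOrlicz V₁) (hV₂ : IsOrlicz V₂) {R : ℝ} (hR : 0 < R) :
    ∃ p : ℝ × ℝ, 0 ≤ p.1 ∧ 0 ≤ p.2 ∧ 0 < p.1 + p.2 ∧
      ∀ q : ℝ × ℝ, 0 ≤ q.1 → 0 ≤ q.2 → 0 < q.1 + q.2 → dualFun V₁ V₂ R p ≤ dualFun V₁ V₂ R q := by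
  set M := dualFun V₁ V₂ R (1, 1) with hM
  obtain ⟨r, hr0, hr1, hr2⟩ : ∃ r : ℝ, 0 < r ∧ V₁ r ≤ 1 / 2 ∧ V₂ r ≤ R / 2 := by
    have e1 : ∀ᶠ r in 𝓝[>] (0 : ℝ), V₁ r ≤ 1 / 2 :=
      ((hV₁.continuous.tendsto' 0 0 hV₁.map_zero).mono_left nhdsWithin_le_nhds).eventually_le_const
        (by norm_num)
    have e2 : ∀ᶠ r in 𝓝[>] (0 : ℝ), V₂ r ≤ R / 2 :=
      ((hV₂.continuous.tendsto' 0 0 hV₂.map_zero).mono_left nhdsWithin_le_nhds).eventually_le_const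
        (by positivity)
    obtain ⟨r, ha, hb, hc⟩ := (e1.and (e2.and self_mem_nhdsWithin)).exists
    exact ⟨r, hc, ha, hb⟩
  obtain ⟨T, hT⟩ : ∃ T : ℝ, 2 ≤ T ∧ M - Real.log (2 * r) ≤ min (1 / 2) (R / 2) * T := by
    have hm : 0 < min (1 / 2) (R / 2) := by positivity
    refine ⟨max 2 ((M - Real.log (2 * r)) / min (1 / 2) (R / 2)), le_max_left _ _, ?_⟩
    rw [mul_comm (min _ _), ← div_le_iff₀ hm]
    exact le_max_right _ _
  set s := rexp (M + 1) / 2 with hs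
  have hs0 : 0 < s := by positivity
  have hlogs : Real.log (2 * s) = M + 1 := by
    rw [hs, mul_div_cancel₀ _ two_ne_zero, Real.log_exp]
  set δ := min 1 (1 / (V₁ s + V₂ s)) with hδdef
  have hVs : 0 < V₁ s + V₂ s := add_pos (hV₁.pos hs0.ne') (hV₂.pos hs0.ne')
  have hδ : 0 < δ := by positivity
  set K : Set (ℝ × ℝ) := {p | 0 ≤ p.1 ∧ 0 ≤ p.2 ∧ δ ≤ p.1 + p.2} ∩ {p | p.1 + p.2 ≤ T} with hK
  have hKc : IsCompact K := by
    refine (isCompact_Icc (a := ((0 : ℝ), (0 : ℝ))) (b := (T, T))).of_isClosed_subset ?_ ?_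
    · have c1 : IsClosed {p : ℝ × ℝ | 0 ≤ p.1} := isClosed_le (by fun_prop) (by fun_prop)
      have c2 : IsClosed {p : ℝ × ℝ | 0 ≤ p.2} := isClosed_le (by fun_prop) (by fun_prop)
      have c3 : IsClosed {p : ℝ × ℝ | δ ≤ p.1 + p.2} := isClosed_le (by fun_prop) (by fun_prop)
      have c4 : IsClosed {p : ℝ × ℝ | p.1 + p.2 ≤ T} := isClosed_le (by fun_prop) (by fun_prop)
      exact (c1.inter (c2.inter c3)).inter c4
    · rintro ⟨u, v⟩ ⟨⟨h1, h2, -⟩, h3⟩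
      simp only [Set.mem_ofPred_eq] at h1 h2 h3
      exact ⟨⟨h1, h2⟩, ⟨by simp; linarith, by simp; linarith⟩⟩
  have h11 : ((1 : ℝ), (1 : ℝ)) ∈ K := by
    refine ⟨⟨zero_le_one, zero_le_one, ?_⟩, ?_⟩
    · exact (min_le_left _ _).trans (by norm_num)
    · simp only [Set.mem_ofPred_eq]; linarith [hT.1]
  obtain ⟨p, hpK, hp⟩ := hKc.exists_isMinOn ⟨_, h11⟩
    ((continuousOn_dualFun hV₁ hV₂ R hδ).mono Set.inter_subset_left)
  refine ⟨p, hpK.1.1, hpK.1.2.1, hδ.trans_le hpK.1.2.2, fun q hq1 hq2 hq => ?_⟩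
  have hpM : dualFun V₁ V₂ R p ≤ M := hp h11
  by_cases hqK : q ∈ K
  · exact hp hqK
  refine hpM.trans ?_
  by_cases hqδ : δ ≤ q.1 + q.2
  · have hqT : T < q.1 + q.2 := by
      by_contra hcon
      exact hqK ⟨⟨hq1, hq2, hqδ⟩, not_lt.1 hcon⟩
    refine le_trans ?_ (le_dualFun hV₁ hV₂ hq1 hq2 hq hr0)
    have e1 : q.1 * min (1 / 2) (R / 2) ≤ q.1 * (1 - V₁ r) :=
      mul_le_mul_of_nonneg_left ((min_le_left _ _).trans (by linarith)) hq1
    have e2 : q.2 * min (1 / 2) (R / 2) ≤ q.2 * (R - V₂ r) :=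
      mul_le_mul_of_nonneg_left ((min_le_right _ _).trans (by linarith)) hq2
    have hm : 0 < min (1 / 2) (R / 2) := by positivity
    nlinarith [hT.2]
  · push Not at hqδ
    refine le_trans ?_ (le_dualFun hV₁ hV₂ hq1 hq2 hq hs0)
    rw [hlogs]
    have e1 : (q.1 + q.2) * (V₁ s + V₂ s) ≤ 1 := by
      rw [← le_div_iff₀ hVs]
      exact hqδ.le.trans (min_le_right _ _)
    nlinarith [mul_nonneg hq1 (hV₂.nonneg s), mul_nonneg hq2 (hV₁.nonneg s), mul_nonneg hq2 hR.le]

/-- The Gibbs measure with density proportional to `exp(-(a V₁ + b V₂))`. -/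
def gibbs (V₁ V₂ : ℝ → ℝ) (p : ℝ × ℝ) : Measure ℝ := volume.tilted (gibbsPot V₁ V₂ p)

lemma partFun_pos (hV₁ : IsOrlicz V₁) (hV₂ : IsOrlicz V₂) {p : ℝ × ℝ} (h1 : 0 ≤ p.1)
    (h2 : 0 ≤ p.2) (hp : 0 < p.1 + p.2) : 0 < partFun V₁ V₂ p :=
  integral_exp_pos (integrable_exp_gibbsPot hV₁ hV₂ h1 h2 hp)

lemma isProbabilityMeasure_gibbs (hV₁ : IsOrlicz V₁) (hV₂ : IsOrlicz V₂) {p : ℝ × ℝ}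
    (h1 : 0 ≤ p.1) (h2 : 0 ≤ p.2) (hp : 0 < p.1 + p.2) : IsProbabilityMeasure (gibbs V₁ V₂ p) :=
  isProbabilityMeasure_tilted (integrable_exp_gibbsPot hV₁ hV₂ h1 h2 hp)

lemma exp_le_integral_gibbs (hV₁ : IsOrlicz V₁) (hV₂ : IsOrlicz V₂) {R : ℝ} {p q : ℝ × ℝ}
    (hp1 : 0 ≤ p.1) (hp2 : 0 ≤ p.2) (hp : 0 < p.1 + p.2)
    (hq1 : 0 ≤ q.1) (hq2 : 0 ≤ q.2) (hq : 0 < q.1 + q.2)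
    (h : dualFun V₁ V₂ R p ≤ dualFun V₁ V₂ R q) :
    rexp ((p.1 - q.1) + (p.2 - q.2) * R) ≤
      ∫ x, rexp ((p.1 - q.1) * V₁ x + (p.2 - q.2) * V₂ x) ∂(gibbs V₁ V₂ p) := by
  have hZp := partFun_pos hV₁ hV₂ hp1 hp2 hp
  have hZq := partFun_pos hV₁ hV₂ hq1 hq2 hq
  have hq' : ∫ x, rexp ((p.1 - q.1) * V₁ x + (p.2 - q.2) * V₂ x) ∂(gibbs V₁ V₂ p)
      = partFun V₁ V₂ q / partFun V₁ V₂ p := by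
    rw [gibbs, integral_exp_tilted (gibbsPot V₁ V₂ p)
      (fun x => (p.1 - q.1) * V₁ x + (p.2 - q.2) * V₂ x)]
    congr 1
    refine integral_congr_ae (ae_of_all _ fun x => ?_)
    simp only [Pi.add_apply, gibbsPot]
    congr 1
    ring
  rw [hq', ← Real.exp_log (div_pos hZq hZp), Real.log_div hZq.ne' hZp.ne']
  refine Real.exp_le_exp.2 ?_
  simp only [dualFun] at h
  linarith

end Gibbs

section Moments

variable {Ω : Type*} {mΩ : MeasurableSpace Ω} {ν : Measure Ω} [IsProbabilityMeasure ν] {W : Ω → ℝ}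

lemma tendsto_one_sub_exp_div (w : ℝ) :
    Tendsto (fun n : ℕ => (1 - rexp (-(1 / ((n : ℝ) + 1) * w))) / (1 / ((n : ℝ) + 1))) atTop
      (𝓝 w) := by
  have h1 : HasDerivAt (fun s : ℝ => 1 - rexp (-(s * w))) w 0 := by
    have := (((hasDerivAt_id (0 : ℝ)).mul_const w).neg.exp).const_sub 1
    simpa using this
  have h2 := h1.tendsto_slope.comp
    (tendsto_nhdsWithin_iff.2 ⟨tendsto_one_div_add_atTop_nhds_zero_nat (𝕜 := ℝ),
      Eventually.of_forall fun n => by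
        simp only [Set.mem_compl_iff, Set.mem_singleton_iff]; positivity⟩)
  refine h2.congr fun n => ?_
  simp [slope_def_field]

lemma lintegral_le_of_exp_le (hW : Measurable W) (hW0 : ∀ x, 0 ≤ W x) {c : ℝ}
    (h : ∀ s : ℝ, 0 < s → rexp (-(s * c)) ≤ ∫ x, rexp (-(s * W x)) ∂ν) :
    ∫⁻ x, ENNReal.ofReal (W x) ∂ν ≤ ENNReal.ofReal c := by
  set g : ℕ → Ω → ℝ := fun n x => (1 - rexp (-(1 / ((n : ℝ) + 1) * W x))) / (1 / ((n : ℝ) + 1))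
    with hg
  have hlim : ∀ x, ENNReal.ofReal (W x) = liminf (fun n => ENNReal.ofReal (g n x)) atTop :=
    fun x => ((ENNReal.tendsto_ofReal (tendsto_one_sub_exp_div (W x))).liminf_eq).symm
  have hle : ∀ n, ∫⁻ x, ENNReal.ofReal (g n x) ∂ν ≤ ENNReal.ofReal c := by
    intro n
    have hs : 0 < 1 / ((n : ℝ) + 1) := by positivity
    have hint : Integrable (fun x => rexp (-(1 / ((n : ℝ) + 1) * W x))) ν := by
      refine Integrable.of_mem_Icc 0 1 (by fun_prop) (ae_of_all _ fun x => ⟨(Real.exp_pos _).le, ?_⟩)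
      exact Real.exp_le_one_iff.2 (neg_nonpos.2 (mul_nonneg hs.le (hW0 x)))
    have hgint : Integrable (g n) ν := ((integrable_const 1).sub hint).div_const _
    rw [← ofReal_integral_eq_lintegral_ofReal hgint
      (ae_of_all _ fun x => div_nonneg (sub_nonneg.2 (Real.exp_le_one_iff.2
        (neg_nonpos.2 (mul_nonneg hs.le (hW0 x))))) hs.le)]
    refine ENNReal.ofReal_le_ofReal ?_
    simp only [hg]
    rw [integral_div, div_le_iff₀ hs]
    have e1 : ∫ x, (1 - rexp (-(1 / ((n : ℝ) + 1) * W x))) ∂ν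
        = 1 - ∫ x, rexp (-(1 / ((n : ℝ) + 1) * W x)) ∂ν := by
      rw [integral_sub (integrable_const 1) hint]; simp
    have e2 := h _ hs
    have e3 := Real.add_one_le_exp (-(1 / ((n : ℝ) + 1) * c))
    rw [e1]
    linarith
  calc ∫⁻ x, ENNReal.ofReal (W x) ∂ν
      = ∫⁻ x, liminf (fun n => ENNReal.ofReal (g n x)) atTop ∂ν := lintegral_congr hlim
    _ ≤ liminf (fun n => ∫⁻ x, ENNReal.ofReal (g n x) ∂ν) atTop :=
        lintegral_liminf_le fun n => by simp only [hg]; fun_prop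
    _ ≤ ENNReal.ofReal c :=
        (liminf_le_liminf (Eventually.of_forall hle)).trans_eq (liminf_const _)

lemma integral_eq_of_exp_le {c s₀ : ℝ} (hs₀ : 0 < s₀)
    (hint : ∀ s < s₀, Integrable (fun x => rexp (s * W x)) ν)
    (h : ∀ s < s₀, rexp (s * c) ≤ ∫ x, rexp (s * W x) ∂ν) :
    ∫ x, W x ∂ν = c := by
  have hmem : (0 : ℝ) ∈ interior (ProbabilityTheory.integrableExpSet W ν) :=
    mem_interior.2 ⟨Set.Iio s₀, fun s hs => hint s hs, isOpen_Iio, hs₀⟩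
  have hd := ProbabilityTheory.hasDerivAt_mgf hmem
  have hd2 : HasDerivAt (fun s : ℝ => rexp (s * c)) c 0 := by
    simpa using ((hasDerivAt_id (0 : ℝ)).mul_const c).exp
  have hmin : IsLocalMin (fun s => ProbabilityTheory.mgf W ν s - rexp (s * c)) 0 := by
    filter_upwards [Iio_mem_nhds hs₀] with s hs
    have := h s hs
    simp only [ProbabilityTheory.mgf] at *
    simpa using this
  have := hmin.hasDerivAt_eq_zero (hd.sub hd2)
  simp only [zero_mul, Real.exp_zero, mul_one] at this
  linarith

end Moments

section Maximizer

variable {V₁ V₂ : ℝ → ℝ}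

/-- The optimality (Karush-Kuhn-Tucker) conditions characterizing the parameters of the entropy
maximizer. -/
structure IsOptimalParam (V₁ V₂ : ℝ → ℝ) (R : ℝ) (p : ℝ × ℝ) : Prop where
  fst_nonneg : 0 ≤ p.1
  snd_nonneg : 0 ≤ p.2
  add_pos : 0 < p.1 + p.2
  mV_fst_le : mV V₁ (gibbs V₁ V₂ p) ≤ 1
  mV_snd_le : mV V₂ (gibbs V₁ V₂ p) ≤ ENNReal.ofReal R
  slack_fst : p.1 * ∫ x, V₁ x ∂(gibbs V₁ V₂ p) = p.1
  slack_snd : p.2 * ∫ x, V₂ x ∂(gibbs V₁ V₂ p) = p.2 * R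

lemma integrable_exp_mul_gibbs (hV₁ : IsOrlicz V₁) (hV₂ : IsOrlicz V₂) {p q : ℝ × ℝ}
    (hq1 : 0 ≤ q.1) (hq2 : 0 ≤ q.2) (hq : 0 < q.1 + q.2) {W : ℝ → ℝ}
    (hW : ∀ x, gibbsPot V₁ V₂ p x + W x = gibbsPot V₁ V₂ q x) :
    Integrable (fun x => rexp (W x)) (gibbs V₁ V₂ p) := by
  by_cases hi : Integrable (fun x => rexp (gibbsPot V₁ V₂ p x))
  · rw [gibbs, integrable_tilted_iff hi]
    refine (integrable_exp_gibbsPot hV₁ hV₂ hq1 hq2 hq).congr (ae_of_all _ fun x => ?_)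
    simp only [smul_eq_mul, ← Real.exp_add, hW]
  · rw [gibbs, tilted_of_not_integrable hi]
    exact integrable_zero_measure

lemma exists_isOptimalParam (hV₁ : IsOrlicz V₁) (hV₂ : IsOrlicz V₂) {R : ℝ} (hR : 0 < R) :
    ∃ p, IsOptimalParam V₁ V₂ R p := by
  obtain ⟨p, hp1, hp2, hp, hmin⟩ := exists_isMinOn_dualFun hV₁ hV₂ hR
  have := isProbabilityMeasure_gibbs hV₁ hV₂ hp1 hp2 hp
  have key : ∀ q : ℝ × ℝ, 0 ≤ q.1 → 0 ≤ q.2 → 0 < q.1 + q.2 → _ := fun q hq1 hq2 hq =>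
    exp_le_integral_gibbs hV₁ hV₂ hp1 hp2 hp hq1 hq2 hq (hmin q hq1 hq2 hq)
  have key1 : ∀ s, 0 ≤ p.1 - s → 0 < (p.1 - s) + p.2 →
      rexp (s * 1) ≤ ∫ x, rexp (s * V₁ x) ∂(gibbs V₁ V₂ p) := fun s hs hs' => by
    simpa using key (p.1 - s, p.2) hs hp2 hs'
  have key2 : ∀ s, 0 ≤ p.2 - s → 0 < p.1 + (p.2 - s) →
      rexp (s * R) ≤ ∫ x, rexp (s * V₂ x) ∂(gibbs V₁ V₂ p) := fun s hs hs' => by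
    simpa using key (p.1, p.2 - s) hp1 hs hs'
  refine ⟨p, hp1, hp2, hp, ?_, ?_, ?_, ?_⟩
  · rw [mV, ← ENNReal.ofReal_one]
    refine lintegral_le_of_exp_le hV₁.continuous.measurable hV₁.nonneg fun s hs => ?_
    simpa using key1 (-s) (by linarith) (by linarith)
  · refine lintegral_le_of_exp_le hV₂.continuous.measurable hV₂.nonneg fun s hs => ?_
    simpa using key2 (-s) (by linarith) (by linarith)
  · rcases hp1.eq_or_lt with h | h
    · simp [← h]
    · rw [integral_eq_of_exp_le (c := 1) (s₀ := p.1) h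
        (fun s hs => ?_) (fun s hs => key1 s (by linarith) (by linarith)), mul_one]
      exact integrable_exp_mul_gibbs hV₁ hV₂ (q := (p.1 - s, p.2)) (by simp; linarith) hp2
        (by simp; linarith) fun x => by simp only [gibbsPot]; ring
  · rcases hp2.eq_or_lt with h | h
    · simp [← h]
    · rw [integral_eq_of_exp_le (c := R) (s₀ := p.2) h
        (fun s hs => ?_) (fun s hs => key2 s (by linarith) (by linarith))]
      exact integrable_exp_mul_gibbs hV₁ hV₂ (q := (p.1, p.2 - s)) hp1 (by simp; linarith)
        (by simp; linarith) fun x => by simp only [gibbsPot]; ring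

lemma integrable_of_mV_ne_top {V : ℝ → ℝ} (hV : IsOrlicz V) {μ : Measure ℝ} (h : mV V μ ≠ ⊤) :
    Integrable V μ :=
  (lintegral_ofReal_ne_top_iff_integrable hV.continuous.aestronglyMeasurable
    (ae_of_all _ hV.nonneg)).1 h

lemma integral_le_of_mV_le {V : ℝ → ℝ} (hV : IsOrlicz V) {μ : Measure ℝ} {c : ℝ} (hc : 0 ≤ c)
    (h : mV V μ ≤ ENNReal.ofReal c) : ∫ x, V x ∂μ ≤ c := by
  rw [integral_eq_lintegral_of_nonneg_ae (ae_of_all _ hV.nonneg)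
    hV.continuous.aestronglyMeasurable]
  exact ENNReal.toReal_le_of_le_ofReal hc h

variable {R : ℝ} {p : ℝ × ℝ}

lemma IsOptimalParam.diffEnt_gibbs (hp : IsOptimalParam V₁ V₂ R p) (hV₁ : IsOrlicz V₁)
    (hV₂ : IsOrlicz V₂) :
    diffEnt (gibbs V₁ V₂ p) = (dualFun V₁ V₂ R p : EReal) := by
  have hexp := integrable_exp_gibbsPot hV₁ hV₂ hp.1 hp.2 hp.3
  have := isProbabilityMeasure_gibbs hV₁ hV₂ hp.1 hp.2 hp.3
  have hac : gibbs V₁ V₂ p ≪ volume := tilted_absolutelyContinuous _ _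
  have hlog : (fun x => Real.log ((gibbs V₁ V₂ p).rnDeriv volume x).toReal) =ᵐ[gibbs V₁ V₂ p]
      fun x => gibbsPot V₁ V₂ p x - Real.log (partFun V₁ V₂ p) :=
    hac.ae_le (log_rnDeriv_tilted_left_self hexp)
  have i1 := integrable_of_mV_ne_top hV₁ (hp.mV_fst_le.trans_lt one_lt_top).ne
  have i2 := integrable_of_mV_ne_top hV₂ (hp.mV_snd_le.trans_lt ofReal_lt_top).ne
  have i3 : Integrable (gibbsPot V₁ V₂ p) (gibbs V₁ V₂ p) :=
    ((i1.const_mul p.1).add (i2.const_mul p.2)).neg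
  have e3 : ∫ x, gibbsPot V₁ V₂ p x ∂(gibbs V₁ V₂ p) = -(p.1 + p.2 * R) := by
    simp only [gibbsPot]
    rw [integral_neg, integral_add (i1.const_mul p.1) (i2.const_mul p.2), integral_const_mul,
      integral_const_mul, hp.slack_fst, hp.slack_snd]
  rw [diffEnt, if_pos ⟨hac, (integrable_congr hlog).2 (i3.sub (integrable_const _))⟩,
    integral_congr_ae hlog, integral_sub i3 (integrable_const _), e3]
  simp only [integral_const, probReal_univ, smul_eq_mul, one_mul, dualFun]
  congr 1
  ring

/-- The entropy deficit controls the relative entropy with respect to the Gibbs measure. -/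
lemma IsOptimalParam.toReal_klDiv_le (hp : IsOptimalParam V₁ V₂ R p) (hV₁ : IsOrlicz V₁)
    (hV₂ : IsOrlicz V₂) (hR : 0 ≤ R) {ν : Measure ℝ} [IsProbabilityMeasure ν]
    (h1 : mV V₁ ν ≤ 1) (h2 : mV V₂ ν ≤ ENNReal.ofReal R)
    (hν : ν ≪ volume) (hi : Integrable (fun x => Real.log (ν.rnDeriv volume x).toReal) ν) :
    InformationTheory.klDiv ν (gibbs V₁ V₂ p) ≠ ⊤ ∧
    (InformationTheory.klDiv ν (gibbs V₁ V₂ p)).toReal ≤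
      dualFun V₁ V₂ R p + ∫ x, Real.log (ν.rnDeriv volume x).toReal ∂ν := by
  have hexp := integrable_exp_gibbsPot hV₁ hV₂ hp.1 hp.2 hp.3
  have := isProbabilityMeasure_gibbs hV₁ hV₂ hp.1 hp.2 hp.3
  have i1 := integrable_of_mV_ne_top hV₁ (h1.trans_lt one_lt_top).ne
  have i2 := integrable_of_mV_ne_top hV₂ (h2.trans_lt ofReal_lt_top).ne
  have i3 : Integrable (gibbsPot V₁ V₂ p) ν := ((i1.const_mul p.1).add (i2.const_mul p.2)).neg
  have hac : ν ≪ gibbs V₁ V₂ p := hν.trans (absolutelyContinuous_tilted hexp)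
  have hllr : Integrable (llr ν (gibbs V₁ V₂ p)) ν := integrable_llr_tilted_right hν i3 hi hexp
  refine ⟨InformationTheory.klDiv_ne_top hac hllr, ?_⟩
  rw [InformationTheory.toReal_klDiv_of_measure_eq hac (by simp), gibbs,
    integral_llr_tilted_right hν i3 hexp hi]
  have e3 : ∫ x, gibbsPot V₁ V₂ p x ∂ν = -(p.1 * ∫ x, V₁ x ∂ν + p.2 * ∫ x, V₂ x ∂ν) := by
    simp only [gibbsPot]
    rw [integral_neg, integral_add (i1.const_mul p.1) (i2.const_mul p.2), integral_const_mul,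
      integral_const_mul]
  have m1 := mul_le_mul_of_nonneg_left
    (integral_le_of_mV_le hV₁ zero_le_one (by simpa using h1)) hp.1
  have m2 := mul_le_mul_of_nonneg_left (integral_le_of_mV_le hV₂ hR h2) hp.2
  rw [e3]
  simp only [dualFun, partFun, llr] at *
  linarith

lemma IsOptimalParam.diffEnt_le (hp : IsOptimalParam V₁ V₂ R p) (hV₁ : IsOrlicz V₁)
    (hV₂ : IsOrlicz V₂) (hR : 0 ≤ R) {ν : Measure ℝ} [IsProbabilityMeasure ν]
    (h1 : mV V₁ ν ≤ 1) (h2 : mV V₂ ν ≤ ENNReal.ofReal R) :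
    diffEnt ν ≤ diffEnt (gibbs V₁ V₂ p) := by
  rw [hp.diffEnt_gibbs hV₁ hV₂, diffEnt]
  split_ifs with h
  · have := (hp.toReal_klDiv_le hV₁ hV₂ hR h1 h2 h.1 h.2).2
    have h0 : 0 ≤ (InformationTheory.klDiv ν (gibbs V₁ V₂ p)).toReal := ENNReal.toReal_nonneg
    exact EReal.coe_le_coe_iff.2 (by linarith)
  · exact bot_le

lemma IsOptimalParam.eq_gibbs (hp : IsOptimalParam V₁ V₂ R p) (hV₁ : IsOrlicz V₁)
    (hV₂ : IsOrlicz V₂) (hR : 0 ≤ R) {ν : Measure ℝ} [IsProbabilityMeasure ν]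
    (h1 : mV V₁ ν ≤ 1) (h2 : mV V₂ ν ≤ ENNReal.ofReal R)
    (he : diffEnt ν = diffEnt (gibbs V₁ V₂ p)) : ν = gibbs V₁ V₂ p := by
  have := isProbabilityMeasure_gibbs hV₁ hV₂ hp.1 hp.2 hp.3
  rw [hp.diffEnt_gibbs hV₁ hV₂, diffEnt] at he
  split_ifs at he with h
  · obtain ⟨hne, hle⟩ := hp.toReal_klDiv_le hV₁ hV₂ hR h1 h2 h.1 h.2
    rw [EReal.coe_eq_coe_iff] at he
    have h0 : (InformationTheory.klDiv ν (gibbs V₁ V₂ p)).toReal = 0 :=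
      le_antisymm (by linarith) ENNReal.toReal_nonneg
    exact InformationTheory.klDiv_eq_zero_iff.1
      (((ENNReal.toReal_eq_zero_iff _).1 h0).resolve_right hne)
  · exact absurd he (EReal.bot_ne_coe _)

end Maximizer

section Product

lemma pi_withDensity_ofReal {ι : Type*} [Fintype ι] {f : ℝ → ℝ} (hf : Integrable f)
    (hf0 : ∀ x, 0 ≤ f x) :
    Measure.pi (fun _ : ι => (volume : Measure ℝ).withDensity fun x => ENNReal.ofReal (f x)) =
      (volume : Measure (ι → ℝ)).withDensity fun x => ENNReal.ofReal (∏ i, f (x i)) := by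
  have := SigmaFinite.withDensity_ofReal (μ := (volume : Measure ℝ)) f
  refine Measure.pi_eq fun s hs => ?_
  have h1 : ∀ x : ι → ℝ, (Set.univ.pi s).indicator (fun x => ENNReal.ofReal (∏ i, f (x i))) x =
      ENNReal.ofReal (∏ i, (s i).indicator f (x i)) := by
    intro x
    by_cases hx : x ∈ Set.univ.pi s
    · rw [Set.indicator_of_mem hx]
      congr 1
      exact Finset.prod_congr rfl fun i _ =>
        (Set.indicator_of_mem (hx i (Set.mem_univ i)) f).symm
    · rw [Set.indicator_of_notMem hx]
      obtain ⟨i, hi⟩ : ∃ i, x i ∉ s i := by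
        by_contra hcon
        push Not at hcon
        exact hx fun i _ => hcon i
      rw [Finset.prod_eq_zero (Finset.mem_univ i) (Set.indicator_of_notMem hi f),
        ENNReal.ofReal_zero]
  have hint : ∀ i, Integrable ((s i).indicator f) := fun i => hf.indicator (hs i)
  have h0 : ∀ i x, 0 ≤ (s i).indicator f x := fun i x => Set.indicator_nonneg (fun y _ => hf0 y) x
  rw [withDensity_apply _ (MeasurableSet.univ_pi hs),
    ← lintegral_indicator (MeasurableSet.univ_pi hs), lintegral_congr h1,
    volume_pi, ← ofReal_integral_eq_lintegral_ofReal (Integrable.fintype_prod hint)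
      (ae_of_all _ fun x => Finset.prod_nonneg fun i _ => h0 i (x i)),
    integral_fintype_prod_eq_prod (fun i => (s i).indicator f),
    ENNReal.ofReal_prod_of_nonneg fun i _ => integral_nonneg (h0 i)]
  refine Finset.prod_congr rfl fun i _ => ?_
  rw [withDensity_apply _ (hs i), ← ofReal_integral_eq_lintegral_ofReal hf.integrableOn
    (ae_of_all _ hf0), integral_indicator (hs i)]

lemma le_withDensity_apply {Ω : Type*} {mΩ : MeasurableSpace Ω} {μ : Measure Ω} [SFinite μ]
    {F : Ω → ℝ≥0∞} (hF : Measurable F) {c : ℝ≥0∞} {A : Set Ω} (h : ∀ x ∈ A, c ≤ F x) :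
    c * μ A ≤ μ.withDensity F A := by
  rw [withDensity_apply', ← setLIntegral_const]
  refine lintegral_mono_ae ?_
  exact ae_restrict_of_ae_restrict_of_subset (t := {x | c ≤ F x}) (fun x hx => h x hx)
    (ae_restrict_mem (measurableSet_le measurable_const hF))

lemma withDensity_apply_le {Ω : Type*} {mΩ : MeasurableSpace Ω} {μ : Measure Ω} [SFinite μ]
    {F : Ω → ℝ≥0∞} (hF : Measurable F) {c : ℝ≥0∞} {A : Set Ω} (h : ∀ x ∈ A, F x ≤ c) :
    μ.withDensity F A ≤ c * μ A := by
  rw [withDensity_apply', ← setLIntegral_const]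
  refine lintegral_mono_ae ?_
  exact ae_restrict_of_ae_restrict_of_subset (t := {x | F x ≤ c}) (fun x hx => h x hx)
    (ae_restrict_mem (measurableSet_le hF measurable_const))

variable {V₁ V₂ : ℝ → ℝ}

lemma pi_gibbs_eq_withDensity (hV₁ : IsOrlicz V₁) (hV₂ : IsOrlicz V₂) {p : ℝ × ℝ} (h1 : 0 ≤ p.1)
    (h2 : 0 ≤ p.2) (hp : 0 < p.1 + p.2) {ι : Type*} [Fintype ι] :
    Measure.pi (fun _ : ι => gibbs V₁ V₂ p) = (volume : Measure (ι → ℝ)).withDensity fun x =>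
      ENNReal.ofReal
        (rexp (∑ i, gibbsPot V₁ V₂ p (x i) - Fintype.card ι * Real.log (partFun V₁ V₂ p))) := by
  have hexp := integrable_exp_gibbsPot hV₁ hV₂ h1 h2 hp
  have hZ := partFun_pos hV₁ hV₂ h1 h2 hp
  have := pi_withDensity_ofReal (ι := ι) (hexp.div_const (partFun V₁ V₂ p))
    fun x => by positivity
  refine this.trans ?_
  congr 1
  ext x
  rw [Finset.prod_div_distrib, ← Real.exp_sum, Finset.prod_const, Finset.card_univ, Real.exp_sub,
    mul_comm (Fintype.card ι : ℝ), Real.exp_mul, Real.exp_log hZ, Real.rpow_natCast]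

lemma volume_le_pi_gibbs (hV₁ : IsOrlicz V₁) (hV₂ : IsOrlicz V₂) {p : ℝ × ℝ} (h1 : 0 ≤ p.1)
    (h2 : 0 ≤ p.2) (hp : 0 < p.1 + p.2) {ι : Type*} [Fintype ι] {A : Set (ι → ℝ)} {θ : ℝ}
    (hA : ∀ x ∈ A, ∑ i, (p.1 * V₁ (x i) + p.2 * V₂ (x i)) ≤ θ) :
    volume A ≤ ENNReal.ofReal (rexp (θ + Fintype.card ι * Real.log (partFun V₁ V₂ p))) *
      Measure.pi (fun _ : ι => gibbs V₁ V₂ p) A := by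
  have hm : Measurable fun x : ι → ℝ => ENNReal.ofReal
      (rexp (∑ i, gibbsPot V₁ V₂ p (x i) - Fintype.card ι * Real.log (partFun V₁ V₂ p))) := by
    have := (continuous_gibbsPot hV₁ hV₂ p).measurable
    fun_prop
  rw [pi_gibbs_eq_withDensity hV₁ hV₂ h1 h2 hp]
  have h := le_withDensity_apply (μ := (volume : Measure (ι → ℝ))) hm (A := A)
    (c := ENNReal.ofReal (rexp (-(θ + Fintype.card ι * Real.log (partFun V₁ V₂ p)))))
    fun x hx => ENNReal.ofReal_le_ofReal (Real.exp_le_exp.2 (by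
      have := hA x hx
      simp only [gibbsPot, Finset.sum_neg_distrib]
      linarith))
  refine le_trans (le_of_eq ?_) (mul_le_mul_right h _)
  rw [← mul_assoc, ← ENNReal.ofReal_mul (Real.exp_pos _).le, ← Real.exp_add, add_neg_cancel,
    Real.exp_zero, ENNReal.ofReal_one, one_mul]

lemma pi_gibbs_le_volume (hV₁ : IsOrlicz V₁) (hV₂ : IsOrlicz V₂) {p : ℝ × ℝ} (h1 : 0 ≤ p.1)
    (h2 : 0 ≤ p.2) (hp : 0 < p.1 + p.2) {ι : Type*} [Fintype ι] {A : Set (ι → ℝ)} {θ : ℝ}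
    (hA : ∀ x ∈ A, θ ≤ ∑ i, (p.1 * V₁ (x i) + p.2 * V₂ (x i))) :
    ENNReal.ofReal (rexp (θ + Fintype.card ι * Real.log (partFun V₁ V₂ p))) *
      Measure.pi (fun _ : ι => gibbs V₁ V₂ p) A ≤ volume A := by
  have hm : Measurable fun x : ι → ℝ => ENNReal.ofReal
      (rexp (∑ i, gibbsPot V₁ V₂ p (x i) - Fintype.card ι * Real.log (partFun V₁ V₂ p))) := by
    have := (continuous_gibbsPot hV₁ hV₂ p).measurable
    fun_prop
  rw [pi_gibbs_eq_withDensity hV₁ hV₂ h1 h2 hp]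
  have h := withDensity_apply_le (μ := (volume : Measure (ι → ℝ))) hm (A := A)
    (c := ENNReal.ofReal (rexp (-(θ + Fintype.card ι * Real.log (partFun V₁ V₂ p)))))
    fun x hx => ENNReal.ofReal_le_ofReal (Real.exp_le_exp.2 (by
      have := hA x hx
      simp only [gibbsPot, Finset.sum_neg_distrib]
      linarith))
  refine le_trans (mul_le_mul_right h _) (le_of_eq ?_)
  rw [← mul_assoc, ← ENNReal.ofReal_mul (Real.exp_pos _).le, ← Real.exp_add, add_neg_cancel,
    Real.exp_zero, ENNReal.ofReal_one, one_mul]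

end Product

section Concentration

variable {ν : Measure ℝ} [IsProbabilityMeasure ν]

lemma pi_sum_ge_le {ι : Type*} [Fintype ι] {f : ℝ → ℝ} (hf : Measurable f) {B : ℝ}
    (hB : ∀ x, |f x| ≤ B) {ε : ℝ} (hε : 0 ≤ ε) :
    Measure.pi (fun _ : ι => ν) {x | Fintype.card ι * ε ≤ ∑ i, (f (x i) - ∫ y, f y ∂ν)} ≤
      ENNReal.ofReal (rexp (-(ε ^ 2 / (2 * B ^ 2)) * Fintype.card ι)) := by
  rcases isEmpty_or_nonempty ι with hι | hι
  · simp
  have hB0 : 0 ≤ B := (abs_nonneg _).trans (hB 0)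
  have hsub := ProbabilityTheory.hasSubgaussianMGF_of_mem_Icc (μ := ν) (X := f) (a := -B) (b := B)
    hf.aemeasurable (ae_of_all _ fun x => abs_le.1 (hB x))
  have hsub' : ∀ i : ι, ProbabilityTheory.HasSubgaussianMGF
      (fun x : ι → ℝ => f (x i) - ∫ y, f y ∂ν) ((‖B - (-B)‖₊ / 2) ^ 2)
      (Measure.pi fun _ : ι => ν) := by
    intro i
    have hmap : (Measure.pi fun _ : ι => ν).map (fun x => x i) = ν :=
      (measurePreserving_eval (fun _ : ι => ν) i).map_eq
    generalize ∫ y, f y ∂ν = m at hsub ⊢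
    rw [← hmap] at hsub
    exact ProbabilityTheory.HasSubgaussianMGF.of_map (Y := fun x : ι → ℝ => x i)
      (measurable_pi_apply i).aemeasurable hsub
  have hind : ProbabilityTheory.iIndepFun (fun (i : ι) (x : ι → ℝ) => f (x i) - ∫ y, f y ∂ν)
      (Measure.pi fun _ : ι => ν) :=
    ProbabilityTheory.iIndepFun_pi (X := fun (_ : ι) y => f y - ∫ z, f z ∂ν)
      fun i => (hf.sub_const _).aemeasurable
  have h := ProbabilityTheory.HasSubgaussianMGF.measure_sum_ge_le_of_iIndepFun hind
    (s := Finset.univ) (fun i _ => hsub' i) (ε := Fintype.card ι * ε) (by positivity)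
  rw [← ENNReal.ofReal_toReal (measure_ne_top (Measure.pi fun _ : ι => ν) _)]
  refine ENNReal.ofReal_le_ofReal (h.trans_eq ?_)
  congr 1
  have hcard : (Fintype.card ι : ℝ) ≠ 0 := by positivity
  simp only [Finset.sum_const, Finset.card_univ, nsmul_eq_mul, NNReal.coe_mul, NNReal.coe_natCast,
    NNReal.coe_pow, NNReal.coe_div, coe_nnnorm, Real.norm_eq_abs, NNReal.coe_ofNat]
  have e : |B - -B| / 2 = B := by rw [sub_neg_eq_add, abs_of_nonneg (by linarith)]; ring
  rw [e]
  rcases hB0.eq_or_lt with h0 | h0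
  · simp [← h0]
  · field_simp

lemma tendsto_pi_average {W : ℝ → ℝ} (hW : Measurable W) (hi : Integrable W ν) {η : ℝ}
    (hη : 0 < η) :
    Tendsto (fun n : ℕ => Measure.pi (fun _ : Fin n => ν)
      {x | η ≤ |(∑ i, W (x i)) / n - ∫ y, W y ∂ν|}) atTop (𝓝 0) := by
  set P := Measure.infinitePi (fun _ : ℕ => ν) with hP
  have hmap : ∀ i, P.map (fun ω => ω i) = ν := fun i => Measure.infinitePi_map_eval _ i
  have hident : ∀ i, ProbabilityTheory.IdentDistrib (fun ω : ℕ → ℝ => W (ω i))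
      (fun ω : ℕ → ℝ => W (ω 0)) P P := by
    intro i
    have : ProbabilityTheory.IdentDistrib (fun ω : ℕ → ℝ => ω i) (fun ω : ℕ → ℝ => ω 0) P P :=
      ⟨(measurable_pi_apply i).aemeasurable, (measurable_pi_apply 0).aemeasurable,
        by rw [hmap, hmap]⟩
    exact this.comp hW
  have hindep : ProbabilityTheory.iIndepFun (fun (i : ℕ) (ω : ℕ → ℝ) => W (ω i)) P :=
    ProbabilityTheory.iIndepFun_infinitePi (X := fun _ => W) fun _ => hW
  have hint : Integrable (fun ω : ℕ → ℝ => W (ω 0)) P := by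
    have : Integrable W (P.map fun ω => ω 0) := by rwa [hmap]
    exact this.comp_measurable (by fun_prop)
  have hexp : ∫ ω, W (ω 0) ∂P = ∫ y, W y ∂ν := by
    rw [← integral_map (f := W) (φ := fun ω : ℕ → ℝ => ω 0)
      (measurable_pi_apply 0).aemeasurable hW.aestronglyMeasurable, hmap]
  have hlaw := ProbabilityTheory.strong_law_ae_real (fun (i : ℕ) (ω : ℕ → ℝ) => W (ω i)) hint
    (fun i j hij => hindep.indepFun hij) hident
  rw [hexp] at hlaw
  have hmeas := tendstoInMeasure_of_tendsto_ae
    (fun n => Measurable.aestronglyMeasurable (by fun_prop)) hlaw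
  rw [tendstoInMeasure_iff_dist] at hmeas
  refine (hmeas η hη).congr fun n => ?_
  have hpi : Measure.pi (fun _ : Fin n => ν) = P.map fun ω (i : Fin n) => ω i := by
    rw [Measure.map_infinitePi_infinitePi_of_inj Fin.val_injective, Measure.infinitePi_eq_pi]
  rw [hpi, Measure.map_apply (by fun_prop)
    (measurableSet_le measurable_const (by fun_prop))]
  congr 1
  ext ω
  change η ≤ dist _ _ ↔ η ≤ |(∑ i : Fin n, W (ω i)) / n - _|
  rw [Real.dist_eq, Fin.sum_univ_eq_sum_range (fun i => W (ω i))]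

lemma eventually_pi_average_ge {W₁ W₂ : ℝ → ℝ} (hW₁ : Measurable W₁) (hW₂ : Measurable W₂)
    (hi₁ : Integrable W₁ ν) (hi₂ : Integrable W₂ ν) {η : ℝ} (hη : 0 < η) :
    ∀ᶠ n : ℕ in atTop, 2⁻¹ ≤ Measure.pi (fun _ : Fin n => ν)
      {x | |(∑ i, W₁ (x i)) / n - ∫ y, W₁ y ∂ν| < η ∧ |(∑ i, W₂ (x i)) / n - ∫ y, W₂ y ∂ν| < η} := by
  have h := (tendsto_pi_average hW₁ hi₁ hη).add (tendsto_pi_average hW₂ hi₂ hη)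
  rw [add_zero] at h
  filter_upwards [h.eventually_le_const (u := 2⁻¹) (by simp)] with n hn
  set A := {x : Fin n → ℝ | |(∑ i, W₁ (x i)) / n - ∫ y, W₁ y ∂ν| < η ∧
    |(∑ i, W₂ (x i)) / n - ∫ y, W₂ y ∂ν| < η} with hA
  have h1 : 1 ≤ Measure.pi (fun _ : Fin n => ν) A + Measure.pi (fun _ : Fin n => ν) Aᶜ := by
    rw [← measure_univ (μ := Measure.pi (fun _ : Fin n => ν)), ← Set.union_compl_self A]
    exact measure_union_le _ _
  have h2 : Measure.pi (fun _ : Fin n => ν) Aᶜ ≤ 2⁻¹ := by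
    refine le_trans (le_trans (measure_mono fun x hx => ?_) (measure_union_le _ _)) hn
    by_contra hcon
    rw [Set.mem_union, not_or] at hcon
    exact hx ⟨not_le.1 hcon.1, not_le.1 hcon.2⟩
  have h3 : (2⁻¹ : ℝ≥0∞) + 2⁻¹ ≤ Measure.pi (fun _ : Fin n => ν) A + 2⁻¹ := by
    rw [ENNReal.inv_two_add_inv_two]
    exact h1.trans (add_le_add_right h2 _)
  exact (ENNReal.add_le_add_iff_right (by simp)).1 h3

end Concentration

section Empirical

lemma integral_empProb (n : ℕ) (x : Fin (n + 1) → ℝ) {f : ℝ → ℝ} :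
    ∫ y, f y ∂(empProb n x : Measure ℝ) = (∑ i, f (x i)) / (n + 1) := by
  change ∫ y, f y ∂(((n : ℝ≥0∞) + 1)⁻¹ • ∑ i, Measure.dirac (x i)) = _
  rw [integral_smul_measure, integral_finsetSum_measure fun i _ => integrable_dirac (by simp)]
  simp only [integral_dirac, ENNReal.toReal_inv, smul_eq_mul]
  rw [ENNReal.toReal_add (by simp) (by simp), ENNReal.toReal_natCast, ENNReal.toReal_one,
    inv_mul_eq_div]

lemma toReal_mV_empProb (n : ℕ) (x : Fin (n + 1) → ℝ) {V : ℝ → ℝ} (hV : ∀ y, 0 ≤ V y) :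
    (mV V (empProb n x : Measure ℝ)).toReal = (∑ i, V (x i)) / (n + 1) := by
  change (∫⁻ y, ENNReal.ofReal (V y)
    ∂(((n : ℝ≥0∞) + 1)⁻¹ • ∑ i, Measure.dirac (x i))).toReal = _
  rw [lintegral_smul_measure, lintegral_finsetSum_measure]
  simp only [lintegral_dirac, smul_eq_mul]
  rw [← ENNReal.ofReal_sum_of_nonneg fun i _ => hV _, ENNReal.toReal_mul, ENNReal.toReal_inv,
    ENNReal.toReal_ofReal (Finset.sum_nonneg fun i _ => hV _),
    ENNReal.toReal_add (by simp) (by simp), ENNReal.toReal_natCast, ENNReal.toReal_one,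
    inv_mul_eq_div]

lemma toReal_mV_eq_integral {V : ℝ → ℝ} (hV : IsOrlicz V) (μ : Measure ℝ) :
    (mV V μ).toReal = ∫ x, V x ∂μ :=
  (integral_eq_lintegral_of_nonneg_ae (ae_of_all _ hV.nonneg)
    hV.continuous.aestronglyMeasurable).symm

/-- The filter of sets of configurations `(n, x)` with `x : Fin (n + 1) → ℝ` whose complement
has, within the Orlicz balls, exponentially small probability under the powers of `ν`. -/
def expFilter (V : ℝ → ℝ) (ν : Measure ℝ) : Filter (Σ n : ℕ, Fin (n + 1) → ℝ) where
  sets := {U | ∃ C γ : ℝ, 0 ≤ C ∧ 0 < γ ∧ ∀ n : ℕ, Measure.pi (fun _ : Fin (n + 1) => ν)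
    {x | ∑ i, V (x i) ≤ n + 1 ∧ (⟨n, x⟩ : Σ n : ℕ, Fin (n + 1) → ℝ) ∉ U} ≤
      ENNReal.ofReal (C * rexp (-(γ * (n + 1))))}
  univ_sets := ⟨0, 1, le_rfl, one_pos, fun n => by simp⟩
  sets_of_superset := by
    rintro U U' ⟨C, γ, hC, hγ, h⟩ hU
    refine ⟨C, γ, hC, hγ, fun n => le_trans (measure_mono ?_) (h n)⟩
    exact fun x hx => ⟨hx.1, fun h' => hx.2 (hU h')⟩
  inter_sets := by
    rintro U U' ⟨C, γ, hC, hγ, h⟩ ⟨C', γ', hC', hγ', h'⟩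
    refine ⟨C + C', min γ γ', by positivity, lt_min hγ hγ', fun n => ?_⟩
    have h1 : ∀ {a : ℝ}, min γ γ' ≤ a →
        rexp (-(a * ((n : ℝ) + 1))) ≤ rexp (-(min γ γ' * ((n : ℝ) + 1))) := fun ha =>
      Real.exp_le_exp.2 (neg_le_neg (mul_le_mul_of_nonneg_right ha (by positivity)))
    refine (measure_mono fun x hx => ?_).trans
      (((measure_union_le _ _).trans (add_le_add (h n) (h' n))).trans ?_)
    · by_cases hxU : (⟨n, x⟩ : Σ n : ℕ, Fin (n + 1) → ℝ) ∈ U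
      · exact Or.inr ⟨hx.1, fun hxU' => hx.2 ⟨hxU, hxU'⟩⟩
      · exact Or.inl ⟨hx.1, hxU⟩
    · rw [← ENNReal.ofReal_add (by positivity) (by positivity), add_mul]
      exact ENNReal.ofReal_le_ofReal (add_le_add
        (mul_le_mul_of_nonneg_left (h1 (min_le_left _ _)) hC)
        (mul_le_mul_of_nonneg_left (h1 (min_le_right _ _)) hC'))

lemma mem_expFilter {V : ℝ → ℝ} {ν : Measure ℝ} {U : Set (Σ n : ℕ, Fin (n + 1) → ℝ)} :
    U ∈ expFilter V ν ↔ ∃ C γ : ℝ, 0 ≤ C ∧ 0 < γ ∧ ∀ n : ℕ,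
      Measure.pi (fun _ : Fin (n + 1) => ν)
        {x | ∑ i, V (x i) ≤ n + 1 ∧ (⟨n, x⟩ : Σ n : ℕ, Fin (n + 1) → ℝ) ∉ U} ≤
          ENNReal.ofReal (C * rexp (-(γ * (n + 1)))) := Iff.rfl

variable {V₁ V₂ : ℝ → ℝ} {ν : Measure ℝ}

lemma eventually_expFilter_sum_le :
    ∀ᶠ z in expFilter V₁ ν, ∑ i, V₁ (z.2 i) ≤ z.1 + 1 := by
  refine ⟨0, 1, le_rfl, one_pos, fun n => ?_⟩
  rw [show {x : Fin (n + 1) → ℝ | ∑ i, V₁ (x i) ≤ n + 1 ∧ (⟨n, x⟩ : Σ n : ℕ, Fin (n + 1) → ℝ) ∉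
    {z : Σ n : ℕ, Fin (n + 1) → ℝ | ∑ i, V₁ (z.2 i) ≤ z.1 + 1}} = ∅ from
    Set.eq_empty_of_forall_notMem fun x hx => hx.2 hx.1]
  simp

variable [IsProbabilityMeasure ν]

lemma eventually_expFilter_average_lt {f : ℝ → ℝ} (hf : Measurable f) {B : ℝ}
    (hB : ∀ x, |f x| ≤ B) {a : ℝ} (ha : ∫ y, f y ∂ν < a) :
    ∀ᶠ z in expFilter V₁ ν, (∑ i, f (z.2 i)) / (z.1 + 1) < a := by
  have hB' : ∀ x, |f x| ≤ |B| + 1 := fun x => (hB x).trans ((le_abs_self B).trans (by linarith))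
  set ε := a - ∫ y, f y ∂ν with hε
  have hε0 : 0 < ε := sub_pos.2 ha
  refine ⟨1, ε ^ 2 / (2 * (|B| + 1) ^ 2), zero_le_one, by positivity, fun n => ?_⟩
  refine (measure_mono fun x hx => ?_).trans
    ((pi_sum_ge_le (ι := Fin (n + 1)) (ν := ν) hf hB' hε0.le).trans_eq ?_)
  · have h : ¬ (∑ i, f (x i)) / ((n : ℝ) + 1) < a := hx.2
    rw [not_lt, le_div_iff₀ (by positivity)] at h
    change (Fintype.card (Fin (n + 1)) : ℝ) * ε ≤ ∑ i, (f (x i) - ∫ y, f y ∂ν)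
    rw [Finset.sum_sub_distrib, Finset.sum_const, Finset.card_univ, Fintype.card_fin, nsmul_eq_mul]
    push_cast
    rw [hε]
    linarith
  · congr 1
    rw [one_mul, Fintype.card_fin]
    push_cast
    ring_nf

lemma tendsto_expFilter_average {f : ℝ → ℝ} (hf : Measurable f) {B : ℝ}
    (hB : ∀ x, |f x| ≤ B) :
    Tendsto (fun z : Σ n : ℕ, Fin (n + 1) → ℝ => (∑ i, f (z.2 i)) / (z.1 + 1)) (expFilter V₁ ν)
      (𝓝 (∫ y, f y ∂ν)) := by
  refine tendsto_order.2 ⟨fun a ha => ?_, fun a ha => eventually_expFilter_average_lt hf hB ha⟩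
  have := eventually_expFilter_average_lt (V₁ := V₁) (ν := ν) (f := fun x => -f x) (a := -a)
    hf.neg (fun x => by rw [abs_neg]; exact hB x) (by rw [integral_neg]; linarith)
  filter_upwards [this] with z hz
  rw [Finset.sum_neg_distrib, neg_div] at hz
  linarith

lemma exists_sub_min_le (hV₁ : IsOrlicz V₁) (hV₂ : IsOrlicz V₂)
    (hgrow : Tendsto (fun x : ℝ => V₁ x / V₂ x) (atTop ⊔ atBot) atTop) {ε : ℝ} (hε : 0 < ε) :
    ∃ M, 0 ≤ M ∧ ∀ x, V₂ x - min (V₂ x) M ≤ ε * V₁ x := by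
  have h := (tendsto_sup.1 hgrow).1.eventually_ge_atTop ε⁻¹
  obtain ⟨r, hr⟩ := (h.and (eventually_gt_atTop 0)).exists_forall_of_atTop
  have hr0 : 0 < r := (hr r le_rfl).2
  refine ⟨V₂ r, hV₂.nonneg r, fun x => ?_⟩
  rcases le_total |x| r with hx | hx
  · rw [min_eq_left (hV₂.mono_abs (hx.trans (le_abs_self r))), sub_self]
    exact mul_nonneg hε.le (hV₁.nonneg x)
  · have h1 := (hr |x| hx).1
    have hx0 : |x| ≠ 0 := by linarith
    have h2 := hV₂.pos hx0
    rw [le_div_iff₀ h2, hV₁.map_abs, hV₂.map_abs, inv_mul_le_iff₀ hε] at h1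
    have : 0 ≤ min (V₂ x) (V₂ r) := le_min (hV₂.nonneg x) (hV₂.nonneg r)
    linarith

lemma tendsto_expFilter_average_of_growth (hV₁ : IsOrlicz V₁) (hV₂ : IsOrlicz V₂)
    (hgrow : Tendsto (fun x : ℝ => V₁ x / V₂ x) (atTop ⊔ atBot) atTop)
    (h1 : mV V₁ ν ≤ 1) (h2 : mV V₂ ν ≠ ⊤) :
    Tendsto (fun z : Σ n : ℕ, Fin (n + 1) → ℝ => (∑ i, V₂ (z.2 i)) / (z.1 + 1)) (expFilter V₁ ν)
      (𝓝 (∫ y, V₂ y ∂ν)) := by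
  have hi₁ := integrable_of_mV_ne_top hV₁ (ne_top_of_le_ne_top ENNReal.one_ne_top h1)
  have hi₂ := integrable_of_mV_ne_top hV₂ h2
  have hm₁ := integral_le_of_mV_le hV₁ zero_le_one (by simpa using h1)
  rw [Metric.tendsto_nhds]
  intro ε hε
  obtain ⟨M, hM, hle⟩ := exists_sub_min_le hV₁ hV₂ hgrow (show 0 < ε / 4 by positivity)
  have hgm : Measurable fun x => min (V₂ x) M := hV₂.continuous.measurable.min measurable_const
  have hgB : ∀ x, |min (V₂ x) M| ≤ M := fun x => by
    rw [abs_of_nonneg (le_min (hV₂.nonneg x) hM)]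
    exact min_le_right _ _
  have hgi : Integrable (fun x => min (V₂ x) M) ν :=
    Integrable.of_bound hgm.aestronglyMeasurable M (ae_of_all _ hgB)
  have hlim := Metric.tendsto_nhds.1
    (tendsto_expFilter_average (V₁ := V₁) (ν := ν) hgm hgB) (ε / 4) (by positivity)
  have hν1 : ∫ x, min (V₂ x) M ∂ν ≤ ∫ x, V₂ x ∂ν :=
    integral_mono hgi hi₂ fun x => min_le_left _ _
  have hν2 : ∫ x, V₂ x ∂ν - ∫ x, min (V₂ x) M ∂ν ≤ ε / 4 := by
    rw [← integral_sub hi₂ hgi]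
    refine (integral_mono (hi₂.sub hgi) (hi₁.const_mul (ε / 4)) hle).trans ?_
    rw [integral_const_mul]
    nlinarith
  filter_upwards [hlim, eventually_expFilter_sum_le] with z hz hz1
  have hn : (0 : ℝ) < z.1 + 1 := by positivity
  have e1 : (∑ i, min (V₂ (z.2 i)) M) / ((z.1 : ℝ) + 1) ≤ (∑ i, V₂ (z.2 i)) / (z.1 + 1) :=
    div_le_div_of_nonneg_right (Finset.sum_le_sum fun i _ => min_le_left _ _) hn.le
  have e2 : (∑ i, V₂ (z.2 i)) / ((z.1 : ℝ) + 1) - (∑ i, min (V₂ (z.2 i)) M) / (z.1 + 1) ≤ ε / 4 := by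
    rw [← sub_div, ← Finset.sum_sub_distrib, div_le_iff₀ hn]
    refine (Finset.sum_le_sum fun i _ => hle (z.2 i)).trans ?_
    rw [← Finset.mul_sum]
    exact mul_le_mul_of_nonneg_left hz1 (by positivity)
  rw [Real.dist_eq, abs_lt] at hz ⊢
  constructor <;> linarith [hz.1, hz.2]

lemma tendsto_empM1 (hV₁ : IsOrlicz V₁) (hV₂ : IsOrlicz V₂)
    (hgrow : Tendsto (fun x : ℝ => V₁ x / V₂ x) (atTop ⊔ atBot) atTop) (μ : M1 V₂)
    (h1 : mV V₁ (μ.1 : Measure ℝ) ≤ 1) :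
    Tendsto (fun z : Σ n : ℕ, Fin (n + 1) → ℝ => empM1 V₂ z.1 z.2)
      (expFilter V₁ (μ.1 : Measure ℝ)) (𝓝 μ) := by
  rw [nhds_induced, tendsto_comap_iff]
  refine Tendsto.prodMk_nhds ?_ ?_
  · rw [ProbabilityMeasure.tendsto_iff_forall_integral_tendsto]
    intro f
    refine (tendsto_expFilter_average (V₁ := V₁) (ν := (μ.1 : Measure ℝ))
      f.continuous.measurable f.norm_coe_le_norm).congr fun z => ?_
    exact (integral_empProb z.1 z.2).symm
  · rw [toReal_mV_eq_integral hV₂]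
    refine (tendsto_expFilter_average_of_growth hV₁ hV₂ hgrow h1 μ.2).congr fun z => ?_
    exact (toReal_mV_empProb z.1 z.2 hV₂.nonneg).symm

end Empirical

section Conditioning

lemma volume_orliczBall_ne_top {V : ℝ → ℝ} (hV : IsOrlicz V) (R : ℝ) (n : ℕ) :
    volume (OrliczBall V R n) ≠ ⊤ := by
  refine ne_top_of_le_ne_top ?_ (measure_mono (t := Metric.closedBall 0 (|R| * n / V 1 + 1)) ?_)
  · exact (isCompact_closedBall _ _).measure_ne_top
  · intro x hx
    have hx' : ∑ i, V (x i) ≤ R * n := hx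
    have h1 := hV.pos one_ne_zero
    rw [mem_closedBall_zero_iff, pi_norm_le_iff_of_nonneg (by positivity)]
    intro i
    have h2 : V (x i) ≤ ∑ j, V (x j) :=
      Finset.single_le_sum (fun j _ => hV.nonneg (x j)) (Finset.mem_univ i)
    have h3 := hV.mul_abs_sub_one_le (x i)
    have h4 : R * n ≤ |R| * n := mul_le_mul_of_nonneg_right (le_abs_self R) (by positivity)
    rw [Real.norm_eq_abs, ← sub_le_iff_le_add, le_div_iff₀ h1]
    linarith

lemma abs_toReal_cond_sub_one_le {Ω : Type*} {mΩ : MeasurableSpace Ω} {m : Measure Ω}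
    {B S T : Set Ω} (hB : MeasurableSet B) (hS : MeasurableSet S) (hBtop : m B ≠ ⊤)
    (hSB : m (S ∩ B) ≠ 0) {r : ℝ} (hr : 0 ≤ r)
    (h : m (S ∩ B ∩ Tᶜ) ≤ ENNReal.ofReal r * m (S ∩ B)) :
    |(ProbabilityTheory.cond ((m B)⁻¹ • m.restrict B) S T).toReal - 1| ≤ r := by
  set ν := (m B)⁻¹ • m.restrict B with hν
  have hB0 : m B ≠ 0 := fun h0 => hSB (measure_mono_null Set.inter_subset_right h0)
  have happ : ∀ A, ν A = (m B)⁻¹ * m (A ∩ B) := fun A => by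
    rw [hν, Measure.smul_apply, Measure.restrict_apply' hB, smul_eq_mul]
  have hS0 : ν S ≠ 0 := by
    rw [happ]
    exact mul_ne_zero (ENNReal.inv_ne_zero.2 hBtop) hSB
  have hSfin : ν S ≠ ⊤ := by
    rw [happ]
    exact ENNReal.mul_ne_top (ENNReal.inv_ne_top.2 hB0)
      (ne_top_of_le_ne_top hBtop (measure_mono Set.inter_subset_right))
  have : IsProbabilityMeasure (ProbabilityTheory.cond ν S) :=
    ProbabilityTheory.cond_isProbabilityMeasure_of_finite hS0 hSfin
  have hc : ProbabilityTheory.cond ν S Tᶜ ≤ ENNReal.ofReal r := by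
    rw [ProbabilityTheory.cond_apply hS, happ (S ∩ Tᶜ), Set.inter_right_comm]
    calc _ ≤ (ν S)⁻¹ * ((m B)⁻¹ * (ENNReal.ofReal r * m (S ∩ B))) := by gcongr
      _ = ENNReal.ofReal r * ((ν S)⁻¹ * ((m B)⁻¹ * m (S ∩ B))) := by ring
      _ = ENNReal.ofReal r := by
        rw [← happ S, ENNReal.inv_mul_cancel hS0 hSfin, mul_one]
  have h1 : (1 : ℝ≥0∞) ≤ ProbabilityTheory.cond ν S T + ENNReal.ofReal r := by
    rw [← measure_univ (μ := ProbabilityTheory.cond ν S), ← Set.union_compl_self T]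
    exact (measure_union_le _ _).trans (add_le_add_right hc _)
  have h2 : (ProbabilityTheory.cond ν S T).toReal ≤ 1 :=
    ENNReal.toReal_le_of_le_ofReal zero_le_one (by simpa using prob_le_one)
  have h3 := ENNReal.toReal_mono (by finiteness) h1
  rw [ENNReal.toReal_one, ENNReal.toReal_add (measure_ne_top _ _) (by simp),
    ENNReal.toReal_ofReal hr] at h3
  rw [abs_le]
  constructor <;> linarith

variable {V₁ V₂ : ℝ → ℝ} {R : ℝ} {p : ℝ × ℝ}

open scoped Pointwise in
lemma IsOptimalParam.eventually_le_volume (hp : IsOptimalParam V₁ V₂ R p) (hV₁ : IsOrlicz V₁)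
    (hV₂ : IsOrlicz V₂) (hR : 0 < R) {τ : ℝ} (hτ : 0 < τ) :
    ∀ᶠ n : ℕ in atTop, ENNReal.ofReal (rexp (n * (dualFun V₁ V₂ R p - τ)) / 2) ≤
      volume {x : Fin n → ℝ | ∑ i, V₁ (x i) ≤ n ∧ ∑ i, V₂ (x i) ≤ n * R} := by
  have hs := hp.add_pos
  have := isProbabilityMeasure_gibbs hV₁ hV₂ hp.1 hp.2 hp.3
  have hi₁ := integrable_of_mV_ne_top hV₁ (ne_top_of_le_ne_top ENNReal.one_ne_top hp.mV_fst_le)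
  have hi₂ := integrable_of_mV_ne_top hV₂ (ne_top_of_le_ne_top ENNReal.ofReal_ne_top hp.mV_snd_le)
  have hm₁ := integral_le_of_mV_le hV₁ zero_le_one (by simpa using hp.mV_fst_le)
  have hm₂ := integral_le_of_mV_le hV₂ hR.le hp.mV_snd_le
  have hs₁ := hp.slack_fst
  have hs₂ := hp.slack_snd
  set m₁ := ∫ x, V₁ x ∂(gibbs V₁ V₂ p)
  set m₂ := ∫ x, V₂ x ∂(gibbs V₁ V₂ p)
  set κ := τ / 2 with hκ
  have hκ0 : 0 < κ := by positivity
  set η := min (min κ (κ * R)) (κ / (p.1 + p.2)) with hη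
  have hη0 : 0 < η := by positivity
  have hη1 : η ≤ κ := (min_le_left _ _).trans (min_le_left _ _)
  have hη2 : η ≤ κ * R := (min_le_left _ _).trans (min_le_right _ _)
  have hη3 : (p.1 + p.2) * η ≤ κ := by
    have : η ≤ κ / (p.1 + p.2) := min_le_right _ _
    rwa [le_div_iff₀ hs, mul_comm] at this
  filter_upwards [eventually_pi_average_ge hV₁.continuous.measurable hV₂.continuous.measurable
    hi₁ hi₂ hη0, eventually_gt_atTop 0] with n hn hn0
  have hn0' : (0 : ℝ) < n := by exact_mod_cast hn0
  set A := {x : Fin n → ℝ | |(∑ i, V₁ (x i)) / n - m₁| < η ∧ |(∑ i, V₂ (x i)) / n - m₂| < η}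
  have hA : ∀ x ∈ A, ((m₁ - η) * n < ∑ i, V₁ (x i) ∧ ∑ i, V₁ (x i) < (m₁ + η) * n) ∧
      ((m₂ - η) * n < ∑ i, V₂ (x i) ∧ ∑ i, V₂ (x i) < (m₂ + η) * n) := by
    rintro x ⟨h1, h2⟩
    rw [abs_sub_lt_iff, sub_lt_iff_lt_add, sub_lt_comm] at h1 h2
    rw [div_lt_iff₀ hn0', lt_div_iff₀ hn0'] at h1 h2
    rw [add_comm m₁, add_comm m₂]
    exact ⟨⟨h1.2, h1.1⟩, ⟨h2.2, h2.1⟩⟩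
  have hlow := pi_gibbs_le_volume hV₁ hV₂ hp.1 hp.2 hp.3 (A := A)
    (θ := n * (p.1 + p.2 * R - κ)) fun x hx => by
      obtain ⟨⟨h1, -⟩, ⟨h2, -⟩⟩ := hA x hx
      rw [Finset.sum_add_distrib, ← Finset.mul_sum, ← Finset.mul_sum]
      have e1 := mul_le_mul_of_nonneg_left h1.le hp.fst_nonneg
      have e2 := mul_le_mul_of_nonneg_left h2.le hp.snd_nonneg
      have e3 := mul_le_mul_of_nonneg_right hη3 hn0'.le
      have e4 : p.1 * ((m₁ - η) * n) + p.2 * ((m₂ - η) * n) =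
          n * (p.1 * m₁ + p.2 * m₂) - (p.1 + p.2) * η * n := by ring
      rw [hs₁, hs₂] at e4
      linarith
  set t := (1 + κ)⁻¹ with ht
  have ht0 : 0 < t := by positivity
  have ht1 : t ≤ 1 := inv_le_one_of_one_le₀ (by linarith)
  have htκ : t * (1 + κ) = 1 := inv_mul_cancel₀ (by positivity)
  have hsub : t • A ⊆ {x : Fin n → ℝ | ∑ i, V₁ (x i) ≤ n ∧ ∑ i, V₂ (x i) ≤ n * R} := by
    rintro _ ⟨x, hx, rfl⟩
    obtain ⟨⟨-, h1⟩, ⟨-, h2⟩⟩ := hA x hx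
    constructor
    · calc ∑ i, V₁ ((t • x) i) ≤ ∑ i, t * V₁ (x i) :=
            Finset.sum_le_sum fun i _ => hV₁.map_mul_le ht0.le ht1 (x i)
        _ = t * ∑ i, V₁ (x i) := by rw [Finset.mul_sum]
        _ ≤ t * ((1 + κ) * n) := mul_le_mul_of_nonneg_left (h1.le.trans
            (mul_le_mul_of_nonneg_right (by linarith) hn0'.le)) ht0.le
        _ = n := by rw [← mul_assoc, htκ, one_mul]
    · calc ∑ i, V₂ ((t • x) i) ≤ ∑ i, t * V₂ (x i) :=
            Finset.sum_le_sum fun i _ => hV₂.map_mul_le ht0.le ht1 (x i)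
        _ = t * ∑ i, V₂ (x i) := by rw [Finset.mul_sum]
        _ ≤ t * ((1 + κ) * (n * R)) := mul_le_mul_of_nonneg_left (h2.le.trans
            ((mul_le_mul_of_nonneg_right (show m₂ + η ≤ (1 + κ) * R by linarith)
              hn0'.le).trans_eq (by ring))) ht0.le
        _ = n * R := by rw [← mul_assoc, htκ, one_mul]
  have hexp : rexp (-κ) ≤ t := by
    rw [Real.exp_neg, ht]
    exact inv_anti₀ (by positivity) (by linarith [Real.add_one_le_exp κ])
  refine le_trans ?_ (measure_mono hsub)
  rw [Measure.addHaar_smul, Module.finrank_fin_fun, abs_of_pos (by positivity)]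
  calc ENNReal.ofReal (rexp (n * (dualFun V₁ V₂ R p - τ)) / 2)
      = ENNReal.ofReal (rexp (-κ) ^ n) * (ENNReal.ofReal (rexp (n * (p.1 + p.2 * R - κ) +
          Fintype.card (Fin n) * Real.log (partFun V₁ V₂ p))) * 2⁻¹) := by
        rw [← mul_assoc, ← ENNReal.ofReal_mul (by positivity), ← Real.exp_nat_mul, ← Real.exp_add,
          div_eq_mul_inv, ENNReal.ofReal_mul (by positivity),
          ENNReal.ofReal_inv_of_pos zero_lt_two, ENNReal.ofReal_ofNat]
        congr 3
        rw [Fintype.card_fin, dualFun, hκ]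
        ring
    _ ≤ ENNReal.ofReal (t ^ n) * volume A := by
        refine mul_le_mul' (ENNReal.ofReal_le_ofReal (pow_le_pow_left₀ (Real.exp_pos _).le hexp n))
          (le_trans ?_ hlow)
        gcongr

lemma IsOptimalParam.abs_toReal_cond_unifBall_sub_one_lt (hp : IsOptimalParam V₁ V₂ R p) (hV₁ : IsOrlicz V₁)
    (hV₂ : IsOrlicz V₂) (hR : 0 < R) {U : Set (Σ n : ℕ, Fin (n + 1) → ℝ)}
    (hU : U ∈ expFilter V₁ (gibbs V₁ V₂ p)) {δ : ℝ} (hδ : 0 < δ) :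
    ∃ ε₀ : ℝ, 0 < ε₀ ∧ ∀ ε : ℝ, 0 < ε → ε ≤ ε₀ → ∃ N : ℕ, ∀ n : ℕ, N ≤ n →
      |(ProbabilityTheory.cond (unifBall V₁ 1 (n + 1))
        {x | (mV V₂ (empProb n x : Measure ℝ)).toReal ∈ Set.Icc (-ε) (R + ε)}
        {x | (⟨n, x⟩ : Σ n : ℕ, Fin (n + 1) → ℝ) ∈ U}).toReal - 1| < δ := by
  obtain ⟨C, γ, hC, hγ, hpi⟩ := mem_expFilter.1 hU
  have hb := hp.snd_nonneg
  refine ⟨γ / (4 * (p.2 + 1)), by positivity, fun ε hε hεle => ?_⟩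
  have hbε : p.2 * ε ≤ γ / 4 := by
    rw [le_div_iff₀ (by positivity)] at hεle
    nlinarith
  have hlow := (tendsto_add_atTop_nat 1).eventually
    (hp.eventually_le_volume hV₁ hV₂ hR (show 0 < γ / 4 by positivity))
  have hlim : Tendsto (fun n : ℕ => 2 * C * rexp (-(γ / 2 * ((n : ℝ) + 1)))) atTop (𝓝 0) := by
    have h1 : Tendsto (fun n : ℕ => γ / 2 * ((n : ℝ) + 1)) atTop atTop :=
      (tendsto_atTop_add_const_right _ 1 tendsto_natCast_atTop_atTop).const_mul_atTop
        (by positivity)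
    simpa using (Real.tendsto_exp_neg_atTop_nhds_zero.comp h1).const_mul (2 * C)
  obtain ⟨N, hN⟩ := (hlow.and (hlim.eventually_lt_const hδ)).exists_forall_of_atTop
  refine ⟨N, fun n hn => ?_⟩
  obtain ⟨h1, h2⟩ := hN n hn
  refine lt_of_le_of_lt ?_ h2
  have hn0 : (0 : ℝ) < n + 1 := by positivity
  have hc₁ := hV₁.continuous
  have hc₂ := hV₂.continuous
  set B := OrliczBall V₁ 1 (n + 1) with hB
  set S := {x : Fin (n + 1) → ℝ |
    (mV V₂ (empProb n x : Measure ℝ)).toReal ∈ Set.Icc (-ε) (R + ε)} with hS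
  have hBmem : ∀ x, x ∈ B ↔ ∑ i, V₁ (x i) ≤ n + 1 := fun x => by
    change ∑ i, V₁ (x i) ≤ 1 * ((n + 1 : ℕ) : ℝ) ↔ _
    push_cast
    rw [one_mul]
  have hSmem : ∀ x, x ∈ S ↔ ∑ i, V₂ (x i) ≤ (R + ε) * (n + 1) := fun x => by
    change _ ∧ _ ↔ _
    rw [toReal_mV_empProb n x hV₂.nonneg, div_le_iff₀ hn0]
    refine and_iff_right ?_
    have : 0 ≤ ∑ i, V₂ (x i) := Finset.sum_nonneg fun i _ => hV₂.nonneg _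
    have : 0 ≤ (∑ i, V₂ (x i)) / ((n : ℝ) + 1) := by positivity
    linarith
  have hBmeas : MeasurableSet B :=
    measurableSet_le (by fun_prop) measurable_const
  have hSmeas : MeasurableSet S := by
    rw [show S = {x | ∑ i, V₂ (x i) ≤ (R + ε) * (n + 1)} from Set.ext hSmem]
    exact measurableSet_le (by fun_prop) measurable_const
  have hlo : ENNReal.ofReal (rexp ((n + 1) * (dualFun V₁ V₂ R p - γ / 4)) / 2) ≤
      volume (S ∩ B) := by
    push_cast at h1
    refine h1.trans (measure_mono fun x hx => ⟨(hSmem x).2 (hx.2.trans ?_), (hBmem x).2 hx.1⟩)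
    rw [mul_comm]
    exact mul_le_mul_of_nonneg_right (by linarith) hn0.le
  refine abs_toReal_cond_sub_one_le hBmeas hSmeas (volume_orliczBall_ne_top hV₁ 1 (n + 1))
    (fun h0 => ?_) (by positivity) ?_
  · rw [h0, nonpos_iff_eq_zero, ENNReal.ofReal_eq_zero] at hlo
    exact absurd hlo (not_le.2 (by positivity))
  · have hup := volume_le_pi_gibbs hV₁ hV₂ hp.1 hp.2 hp.3
      (A := S ∩ B ∩ {x | (⟨n, x⟩ : Σ n : ℕ, Fin (n + 1) → ℝ) ∈ U}ᶜ)
      (θ := (n + 1) * (p.1 + p.2 * R + γ / 4)) fun x hx => by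
        rw [Finset.sum_add_distrib, ← Finset.mul_sum, ← Finset.mul_sum]
        have e1 := mul_le_mul_of_nonneg_left ((hBmem x).1 hx.1.2) hp.fst_nonneg
        have e2 := mul_le_mul_of_nonneg_left ((hSmem x).1 hx.1.1) hp.snd_nonneg
        have e3 := mul_le_mul_of_nonneg_right hbε hn0.le
        linarith
    have hsub : S ∩ B ∩ {x | (⟨n, x⟩ : Σ n : ℕ, Fin (n + 1) → ℝ) ∈ U}ᶜ ⊆
        {x | ∑ i, V₁ (x i) ≤ n + 1 ∧ (⟨n, x⟩ : Σ n : ℕ, Fin (n + 1) → ℝ) ∉ U} :=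
      fun x hx => ⟨(hBmem x).1 hx.1.2, hx.2⟩
    have hpi' := (measure_mono hsub).trans (hpi n)
    refine hup.trans (le_trans (mul_le_mul' le_rfl hpi')
      (le_trans (le_of_eq ?_) (mul_le_mul' le_rfl hlo)))
    rw [← ENNReal.ofReal_mul (by positivity), ← ENNReal.ofReal_mul (by positivity)]
    congr 1
    rw [Fintype.card_fin, dualFun]
    push_cast
    rw [show rexp ((n + 1) * (p.1 + p.2 * R + γ / 4) + (n + 1) * Real.log (partFun V₁ V₂ p)) *
        (C * rexp (-(γ * (n + 1)))) = C * (rexp ((n + 1) * (p.1 + p.2 * R + γ / 4) +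
          (n + 1) * Real.log (partFun V₁ V₂ p)) * rexp (-(γ * (n + 1)))) by ring,
      show ∀ u v : ℝ, 2 * C * rexp u * (rexp v / 2) = C * (rexp u * rexp v) from
        fun u v => by ring, ← Real.exp_add, ← Real.exp_add]
    congr 2
    ring

end Conditioning

/-- There is a unique maximizer `ν*` of the entropy under the constraints
`m_{V₁}(ν) ≤ 1` and `m_{V₂}(ν) ∈ [0,R]`, and the empirical measure of a uniform random
point of `B₁^{n,V₁}`, conditioned on `m_{V₂}(L^{n,V₁}) ∈ [-ε, R+ε]`, concentrates on
`ν*` in the `d_{V₂}`-topology as `n → ∞` followed by `ε → 0`. -/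
theorem stmt16 (V₁ V₂ : ℝ → ℝ) (hV₁ : IsOrlicz V₁) (hV₂ : IsOrlicz V₂)
    (hgrow : Tendsto (fun x : ℝ => V₁ x / V₂ x) (atTop ⊔ atBot) atTop)
    (R : ℝ) (hR : 0 < R) :
    ∃ νstar : M1 V₂,
      mV V₁ (νstar.1 : Measure ℝ) ≤ 1 ∧ mV V₂ (νstar.1 : Measure ℝ) ≤ ENNReal.ofReal R ∧
      (∀ ν : ProbabilityMeasure ℝ,
        mV V₁ (ν : Measure ℝ) ≤ 1 → mV V₂ (ν : Measure ℝ) ≤ ENNReal.ofReal R →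
          diffEnt (ν : Measure ℝ) ≤ diffEnt (νstar.1 : Measure ℝ)) ∧
      (∀ ν : ProbabilityMeasure ℝ,
        mV V₁ (ν : Measure ℝ) ≤ 1 → mV V₂ (ν : Measure ℝ) ≤ ENNReal.ofReal R →
          diffEnt (ν : Measure ℝ) = diffEnt (νstar.1 : Measure ℝ) → ν = νstar.1) ∧
      ∀ G : Set (M1 V₂), IsOpen G → νstar ∈ G →
        ∀ δ : ℝ, 0 < δ → ∃ ε₀ : ℝ, 0 < ε₀ ∧ ∀ ε : ℝ, 0 < ε → ε ≤ ε₀ →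
          ∃ N : ℕ, ∀ n : ℕ, N ≤ n →
            |(ProbabilityTheory.cond (unifBall V₁ 1 (n + 1))
                {x | (mV V₂ (empProb n x : Measure ℝ)).toReal ∈ Set.Icc (-ε) (R + ε)}
                {x | empM1 V₂ n x ∈ G}).toReal - 1| < δ := by
  obtain ⟨p, hp⟩ := exists_isOptimalParam hV₁ hV₂ hR
  have hprob := isProbabilityMeasure_gibbs hV₁ hV₂ hp.1 hp.2 hp.3
  set μ : M1 V₂ := ⟨⟨gibbs V₁ V₂ p, hprob⟩,
    ne_top_of_le_ne_top ENNReal.ofReal_ne_top hp.mV_snd_le⟩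
  refine ⟨μ, hp.mV_fst_le, hp.mV_snd_le, fun ν h1 h2 => ?_, fun ν h1 h2 he => ?_,
    fun G hG hmem δ hδ => ?_⟩
  · have : IsProbabilityMeasure (ν : Measure ℝ) := ν.2
    exact hp.diffEnt_le hV₁ hV₂ hR.le h1 h2
  · have : IsProbabilityMeasure (ν : Measure ℝ) := ν.2
    have heq : (ν : Measure ℝ) = gibbs V₁ V₂ p := hp.eq_gibbs hV₁ hV₂ hR.le h1 h2 he
    exact Subtype.ext heq
  · exact hp.abs_toReal_cond_unifBall_sub_one_lt hV₁ hV₂ hR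
      (tendsto_empM1 hV₁ hV₂ hgrow μ hp.mV_fst_le (hG.mem_nhds hmem)) hδ
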